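/- Let N be a finite-dimensional complex subspace of the space of (equivalence classes modulo a.e. equality of) locally integrable functions on [1, +∞) with the property that for every λ > 1, the map S_λ defined by (S_λ w)(r) = w(λr) for r ≥ 1 sends N into N. Then there exist a finite index set I, complex numbers (α_i)_{i∈I} and natural numbers (p_i)_{i∈I} such that N is the linear span of the functions r ↦ (log r)^j · r^{α_i} for i ∈ I and 0 ≤ j ≤ p_i − 1, where r^{α} := exp(α log r) for complex α. -/

import Mathlib

open MeasureTheory Set

noncomputable section

/-- The measure used to identify functions a.e. on `[1, +∞)`. -/
def μIci : Measure ℝ := volume.restrict (Ici (1 : ℝ))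

/-!
Write `F w x = ∫ r in 1..x, w r / r`. Invariance under `S_c` gives
`F w (c * x) = F w c + F (S_c w) x`, so the difference quotients of `c ↦ F w (c * x)` at `c = 1`
lie in the finite-dimensional space spanned by the `F v`, `v ∈ N`, and the constants. Such a space
is closed under pointwise limits, and the quotients converge to `w` almost everywhere; hence every
`w ∈ N` is a primitive `F v + a`. Bootstrapping, the elements of `N` have continuously
differentiable representatives and `x d/dx` acts on `N`. On a generalized eigenspace of dimension
`p` for the eigenvalue `α`, the Euler equation `(x d/dx - α)ᵖ u = 0` puts it inside the span of the
`p` functions `(log x)ʲ x^α`, `j < p`, and counting dimensions gives equality.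
-/

open Filter Topology

section EulerEquation

/-- The function `x ↦ (log x)ʲ x^α`, with `x^α` encoded as `exp (α log x)`. -/
def logPow (α : ℂ) (j : ℕ) (x : ℝ) : ℂ := (Real.log x : ℂ) ^ j * Complex.exp (α * Real.log x)

/-- The space of functions `P (log x) x^α` with `P` a polynomial of degree less than `k`. -/
def logPowSpan (α : ℂ) (k : ℕ) : Submodule ℂ (ℝ → ℂ) :=
  Submodule.span ℂ (range fun j : Fin k => logPow α j)

variable {α : ℂ} {k : ℕ} {s : Set ℝ} {u g : ℝ → ℂ}

lemma logPow_mem_logPowSpan {j : ℕ} (hj : j < k) : logPow α j ∈ logPowSpan α k :=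
  Submodule.subset_span ⟨⟨j, hj⟩, rfl⟩

lemma measurable_logPow (α : ℂ) (j : ℕ) : Measurable (logPow α j) := by
  unfold logPow
  fun_prop

lemma logPow_zero_mul_logPow_neg_zero (α : ℂ) (x : ℝ) : logPow α 0 x * logPow (-α) 0 x = 1 := by
  simp [logPow, ← Complex.exp_add]

lemma hasDerivAt_logPow (α : ℂ) (j : ℕ) {x : ℝ} (hx : x ≠ 0) :
    HasDerivAt (logPow α j) ((α * logPow α j x + j * logPow α (j - 1) x) / x) x := by
  have hlog : HasDerivAt (fun x : ℝ => (Real.log x : ℂ)) (x : ℂ)⁻¹ x := by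
    simpa using (Real.hasDerivAt_log hx).ofReal_comp
  refine ((hlog.fun_pow j).mul (hlog.const_mul α).cexp).congr_deriv ?_
  simp only [logPow]
  ring

lemma exists_eqOn_smul_logPow_zero (hs : IsOpen s) (hs' : IsPreconnected s) (h0 : 0 ∉ s)
    (hu : ∀ x ∈ s, HasDerivAt u (α * u x / x) x) :
    ∃ c : ℂ, EqOn u (c • logPow α 0) s := by
  have hder : ∀ x ∈ s, HasDerivAt (u * logPow (-α) 0) 0 x := fun x hx => by
    have hx0 : x ≠ 0 := ne_of_mem_of_not_mem hx h0
    refine ((hu x hx).mul (hasDerivAt_logPow (-α) 0 hx0)).congr_deriv ?_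
    simp only [Nat.cast_zero]
    ring
  obtain ⟨c, hc⟩ := hs.exists_is_const_of_deriv_eq_zero hs'
    (fun x hx => (hder x hx).differentiableAt.differentiableWithinAt)
    (fun x hx => (hder x hx).deriv)
  refine ⟨c, fun x hx => ?_⟩
  calc u x = u x * logPow (-α) 0 x * logPow α 0 x := by
        rw [mul_assoc, mul_comm (logPow (-α) 0 x), logPow_zero_mul_logPow_neg_zero, mul_one]
    _ = (c • logPow α 0) x := by rw [← hc x hx]; rfl

lemma exists_hasDerivAt_of_mem_logPowSpan (hg : g ∈ logPowSpan α k) :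
    ∃ G ∈ logPowSpan α (k + 1), ∀ x : ℝ, x ≠ 0 → HasDerivAt G ((α * G x + g x) / x) x := by
  induction hg using Submodule.span_induction with
  | mem f hf =>
    obtain ⟨j, rfl⟩ := hf
    refine ⟨((j : ℂ) + 1)⁻¹ • logPow α (j + 1),
      Submodule.smul_mem _ _ (logPow_mem_logPowSpan (Nat.succ_lt_succ j.2)), fun x hx => ?_⟩
    refine ((hasDerivAt_logPow α (j + 1) hx).const_smul ((j : ℂ) + 1)⁻¹).congr_deriv ?_
    have hj : (j : ℂ) + 1 ≠ 0 := Nat.cast_add_one_ne_zero j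
    simp only [Pi.smul_apply, smul_eq_mul, Nat.add_sub_cancel, Nat.cast_add, Nat.cast_one]
    field_simp
  | zero => exact ⟨0, zero_mem _, fun x _ => by simp⟩
  | add f₁ f₂ _ _ ih₁ ih₂ =>
    obtain ⟨G₁, hG₁, hd₁⟩ := ih₁
    obtain ⟨G₂, hG₂, hd₂⟩ := ih₂
    refine ⟨G₁ + G₂, add_mem hG₁ hG₂, fun x hx => ?_⟩
    refine ((hd₁ x hx).add (hd₂ x hx)).congr_deriv ?_
    simp only [Pi.add_apply]
    ring
  | smul c f _ ih =>
    obtain ⟨G, hG, hd⟩ := ih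
    refine ⟨c • G, Submodule.smul_mem _ _ hG, fun x hx => ?_⟩
    refine ((hd x hx).const_smul c).congr_deriv ?_
    simp only [Pi.smul_apply, smul_eq_mul]
    ring

lemma exists_mem_logPowSpan_succ_eqOn (hs : IsOpen s) (hs' : IsPreconnected s) (h0 : 0 ∉ s)
    (hg : g ∈ logPowSpan α k) (hu : ∀ x ∈ s, HasDerivAt u ((α * u x + g x) / x) x) :
    ∃ h ∈ logPowSpan α (k + 1), EqOn u h s := by
  obtain ⟨G, hG, hd⟩ := exists_hasDerivAt_of_mem_logPowSpan hg
  obtain ⟨c, hc⟩ := exists_eqOn_smul_logPow_zero (α := α) (u := u - G) hs hs' h0 fun x hx => by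
    refine ((hu x hx).sub (hd x (ne_of_mem_of_not_mem hx h0))).congr_deriv ?_
    simp only [Pi.sub_apply]
    ring
  refine ⟨c • logPow α 0 + G, add_mem
    (Submodule.smul_mem _ _ (logPow_mem_logPowSpan k.succ_pos)) hG, fun x hx => ?_⟩
  exact sub_eq_iff_eq_add.1 (hc hx)

lemma exists_mem_logPowSpan_eqOn_of_mem_genEigenspace {E : Type*} [AddCommGroup E] [Module ℂ E]
    {D : Module.End ℂ E} {Φ : E →ₗ[ℂ] ℝ → ℂ} (hs : IsOpen s) (hs' : IsPreconnected s)
    (h0 : 0 ∉ s) (hΦ : ∀ v, ∀ x ∈ s, HasDerivAt (Φ v) (Φ (D v) x / x) x) {v : E}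
    (hv : v ∈ D.genEigenspace α k) :
    ∃ h ∈ logPowSpan α k, EqOn (Φ v) h s := by
  induction k generalizing v with
  | zero =>
    obtain rfl : v = 0 := by simpa using hv
    exact ⟨0, zero_mem _, by simp [EqOn]⟩
  | succ k ih =>
    obtain ⟨g, hg, hgs⟩ := ih (v := (D - α • 1) v) (by
      rwa [Module.End.mem_genEigenspace_nat, LinearMap.mem_ker, pow_succ,
        Module.End.mul_apply] at *)
    refine exists_mem_logPowSpan_succ_eqOn hs hs' h0 hg fun x hx =>
      (hΦ v x hx).congr_deriv ?_
    rw [← hgs hx]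
    simp

end EulerEquation

lemma maxGenEigenspace_eq_genEigenspace_finrank_maxGenEigenspace {K E : Type*} [Field K]
    [AddCommGroup E] [Module K E] [FiniteDimensional K E] (D : Module.End K E) (α : K) :
    D.maxGenEigenspace α = D.genEigenspace α (Module.finrank K (D.maxGenEigenspace α)) := by
  refine le_antisymm (fun v hv => ?_) ((D.genEigenspace α).mono le_top)
  have hmaps : ∀ x ∈ D.maxGenEigenspace α,
      (D - algebraMap K (Module.End K E) α) x ∈ D.maxGenEigenspace α :=
    Module.End.mapsTo_maxGenEigenspace_of_comm (Algebra.mul_sub_algebraMap_commutes D α) α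
  obtain ⟨m, hm⟩ := D.isNilpotent_restrict_maxGenEigenspace_sub_algebraMap α hmaps
  have hker := Module.End.ker_pow_le_ker_pow_finrank
    ((D - algebraMap K (Module.End K E) α).restrict hmaps) m
    (show (⟨v, hv⟩ : D.maxGenEigenspace α) ∈ _ by rw [LinearMap.mem_ker, hm]; rfl)
  rw [LinearMap.mem_ker, Module.End.pow_restrict] at hker
  rw [Module.End.mem_genEigenspace_nat, ← Algebra.algebraMap_eq_smul_one]
  exact congrArg Subtype.val hker

lemma tendsto_slope_comp_mul_right {E : Type*} [NormedAddCommGroup E] [NormedSpace ℝ E]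
    {F : ℝ → E} {F' : E} {x : ℝ} (hF : HasDerivAt F F' x) :
    Tendsto (fun c : ℝ => (c - 1)⁻¹ • (F (c * x) - F x)) (𝓝[>] 1) (𝓝 (x • F')) := by
  have hder : HasDerivAt (fun c : ℝ => F (c * x)) (x • F') 1 := by
    simpa only [one_mul, Function.comp_def] using HasDerivAt.scomp (h := fun c : ℝ => c * x)
      (1 : ℝ) (by rwa [one_mul]) ((hasDerivAt_id (1 : ℝ)).mul_const x)
  have hslope := (hasDerivAt_iff_tendsto_slope.1 hder).mono_left
    (nhdsWithin_mono _ fun c (hc : 1 < c) => hc.ne')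
  exact hslope.congr fun c => by simp [slope_def_module]

lemma exists_eqOn_of_tendsto_of_frequently {𝕜 E X ι : Type*} [NontriviallyNormedField 𝕜]
    [CompleteSpace 𝕜] [AddCommGroup E] [Module 𝕜 E] [FiniteDimensional 𝕜 E] (L : E →ₗ[𝕜] X → 𝕜)
    {l : Filter ι} {q : ι → X → 𝕜} {g : X → 𝕜} {s : Set X}
    (hlim : ∀ x ∈ s, Tendsto (fun i => q i x) l (𝓝 (g x)))
    (hq : ∃ᶠ i in l, ∃ v, EqOn (L v) (q i) s) : ∃ v, EqOn (L v) g s := by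
  let R := LinearMap.range (LinearMap.funLeft 𝕜 𝕜 ((↑) : s → X) ∘ₗ L)
  have hclosed : IsClosed (R : Set (s → 𝕜)) := Submodule.closed_of_finiteDimensional R
  obtain ⟨v, hv⟩ : (fun x : s => g x) ∈ R :=
    hclosed.mem_of_frequently_of_tendsto
      (hq.mono fun i ⟨v, hv⟩ => ⟨v, funext fun x => hv x.2⟩)
      (tendsto_pi_nhds.2 fun x => hlim x x.2)
  exact ⟨v, fun x hx => congrFun hv ⟨x, hx⟩⟩

section Primitive

instance : NullSingletonClass μIci := inferInstanceAs (NullSingletonClass (volume.restrict _))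

lemma ae_μIci_one_lt : ∀ᵐ x ∂μIci, 1 < x := by
  have hne : ∀ᵐ x ∂μIci, x ≠ 1 := by simp [ae_iff]
  have hge : ∀ᵐ x ∂μIci, 1 ≤ x := ae_restrict_mem measurableSet_Ici
  filter_upwards [hne, hge] with x hx hx' using hx'.lt_of_ne' hx

lemma intervalIntegral_μIci {E : Type*} [NormedAddCommGroup E] [NormedSpace ℝ E] (f : ℝ → E)
    {a b : ℝ} (ha : 1 ≤ a) (hb : 1 ≤ b) : ∫ x in a..b, f x ∂μIci = ∫ x in a..b, f x := by
  have hsub {a b : ℝ} (ha : 1 ≤ a) : Ioc a b ⊆ Ici 1 := fun x hx => ha.trans hx.1.le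
  simp only [intervalIntegral, μIci, Measure.restrict_restrict_of_subset (hsub ha),
    Measure.restrict_restrict_of_subset (hsub hb)]

/-- The primitive, vanishing at `1`, of `f` with respect to `dr / r` on `[1, ∞)`. Integrating
against `μIci` makes it vanish on `(-∞, 1]`, so that it is continuous on the whole line. -/
def logPrimitive (f : ℝ → ℂ) (x : ℝ) : ℂ := ∫ r in (1 : ℝ)..x, f r / r ∂μIci

variable {f g : ℝ → ℂ}

lemma intervalIntegrable_div_μIci (hf : ∀ b : ℝ, IntegrableOn f (Icc 1 b)) (a b : ℝ) :
    IntervalIntegrable (fun r => f r / r) μIci a b := by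
  have hcont : ContinuousOn (fun r : ℝ => (r : ℂ)⁻¹) (Icc 1 (max a b)) :=
    ContinuousOn.inv₀ (by fun_prop) fun r hr => by exact_mod_cast (zero_lt_one.trans_le hr.1).ne'
  have hint := (hf (max a b)).mul_continuousOn hcont isCompact_Icc
  rw [intervalIntegrable_iff, IntegrableOn, μIci, Measure.restrict_restrict measurableSet_uIoc]
  exact hint.mono_set fun x hx => ⟨hx.2, hx.1.2⟩

lemma intervalIntegrable_div (hf : ∀ b : ℝ, IntegrableOn f (Icc 1 b)) {a b : ℝ} (ha : 1 ≤ a)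
    (hb : 1 ≤ b) : IntervalIntegrable (fun r => f r / r) volume a b := by
  have hint := intervalIntegrable_iff.1 (intervalIntegrable_div_μIci hf a b)
  rw [IntegrableOn, μIci, Measure.restrict_restrict_of_subset] at hint
  · exact intervalIntegrable_iff.2 hint
  · exact fun x hx => (le_min ha hb).trans hx.1.le

lemma logPrimitive_eq_intervalIntegral (f : ℝ → ℂ) {x : ℝ} (hx : 1 ≤ x) :
    logPrimitive f x = ∫ r in (1 : ℝ)..x, f r / r :=
  intervalIntegral_μIci _ le_rfl hx

lemma logPrimitive_congr_ae (h : f =ᵐ[μIci] g) : logPrimitive f = logPrimitive g := by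
  funext x
  exact intervalIntegral.integral_congr_ae (h.mono fun r hr _ => by rw [hr])

lemma logPrimitive_add (hf : ∀ b : ℝ, IntegrableOn f (Icc 1 b))
    (hg : ∀ b : ℝ, IntegrableOn g (Icc 1 b)) :
    logPrimitive (f + g) = logPrimitive f + logPrimitive g := by
  funext x
  simp only [logPrimitive, Pi.add_apply, add_div]
  exact intervalIntegral.integral_add (intervalIntegrable_div_μIci hf _ _)
    (intervalIntegrable_div_μIci hg _ _)

lemma logPrimitive_smul (c : ℂ) (f : ℝ → ℂ) : logPrimitive (c • f) = c • logPrimitive f := by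
  funext x
  simp only [logPrimitive, Pi.smul_apply, smul_eq_mul, mul_div_assoc,
    intervalIntegral.integral_const_mul]

lemma logPrimitive_mul (hf : ∀ b : ℝ, IntegrableOn f (Icc 1 b)) {c x : ℝ} (hc : 1 ≤ c)
    (hx : 1 ≤ x) :
    logPrimitive f (c * x) = logPrimitive f c + logPrimitive (fun r => f (c * r)) x := by
  have hc0 : c ≠ 0 := (zero_lt_one.trans_le hc).ne'
  have hcx : 1 ≤ c * x := one_le_mul_of_one_le_of_one_le hc hx
  have hsubst : ∫ r in (1 : ℝ)..x, f (c * r) / r = ∫ r in c..c * x, f r / r := by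
    have hscale :=
      intervalIntegral.smul_integral_comp_mul_left (a := 1) (b := x) (fun r => f r / r) c
    rw [mul_one] at hscale
    rw [← hscale, ← intervalIntegral.integral_smul]
    refine intervalIntegral.integral_congr fun r _ => ?_
    have hc0' : (c : ℂ) ≠ 0 := by exact_mod_cast hc0
    simp only [Complex.real_smul, Complex.ofReal_mul]
    rw [mul_div, mul_div_mul_left _ _ hc0']
  simp only [logPrimitive_eq_intervalIntegral, hc, hx, hcx, hsubst]
  exact (intervalIntegral.integral_add_adjacent_intervals (intervalIntegrable_div hf le_rfl hc)
    (intervalIntegrable_div hf hc hcx)).symm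

lemma continuous_logPrimitive (hf : ∀ b : ℝ, IntegrableOn f (Icc 1 b)) :
    Continuous (logPrimitive f) :=
  intervalIntegral.continuous_primitive (intervalIntegrable_div_μIci hf) 1

lemma logPrimitive_eventuallyEq (f : ℝ → ℂ) {x : ℝ} (hx : 1 < x) :
    logPrimitive f =ᶠ[𝓝 x] fun y => ∫ r in (1 : ℝ)..y, f r / r := by
  filter_upwards [Ioi_mem_nhds hx] with y hy using logPrimitive_eq_intervalIntegral f hy.le

lemma hasDerivAt_logPrimitive (hf : Continuous f) {x : ℝ} (hx : 1 < x) :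
    HasDerivAt (logPrimitive f) (f x / x) x := by
  have hcont : ContinuousOn (fun r : ℝ => f r / r) (Ioi 0) :=
    hf.continuousOn.div (by fun_prop) fun r hr => by exact_mod_cast ne_of_gt hr
  have hx0 : 0 < x := zero_lt_one.trans hx
  refine HasDerivAt.congr_of_eventuallyEq ?_ (logPrimitive_eventuallyEq f hx)
  exact intervalIntegral.integral_hasDerivAt_right
    (intervalIntegrable_div (fun b => hf.continuousOn.integrableOn_Icc) le_rfl hx.le)
    (hcont.stronglyMeasurableAtFilter isOpen_Ioi x hx0)
    (hcont.continuousAt (Ioi_mem_nhds hx0))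

lemma ae_hasDerivAt_logPrimitive (hf : ∀ b : ℝ, IntegrableOn f (Icc 1 b)) :
    ∀ᵐ x ∂μIci, HasDerivAt (logPrimitive f) (f x / x) x := by
  have hder : ∀ᵐ x, ∀ n : ℕ, x ∈ uIcc (1 : ℝ) (n + 1) → ∀ c ∈ uIcc (1 : ℝ) (n + 1),
      HasDerivAt (fun y => ∫ r in c..y, f r / r) (f x / x) x :=
    ae_all_iff.2 fun n =>
      (intervalIntegrable_div hf le_rfl (by simp)).ae_hasDerivAt_integral
  filter_upwards [ae_restrict_of_ae hder, ae_μIci_one_lt] with x hx hx1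
  obtain ⟨n, hn⟩ := exists_nat_ge x
  exact (hx n (mem_uIcc_of_le hx1.le (by linarith)) 1 left_mem_uIcc).congr_of_eventuallyEq
    (logPrimitive_eventuallyEq f hx1)

end Primitive

section Representatives

variable {E : Type*} [AddCommGroup E] [Module ℂ E] {ι : E →ₗ[ℂ] ℝ →ₘ[μIci] ℂ}

/-- The map `(w, a) ↦ (x ↦ (∫ r in 1..x, ι w r / r) + a)`, which parametrizes the continuous
antiderivatives for `x d/dx` of the classes `ι w`. -/
def logAntiderivative (hloc : ∀ (w : E) (b : ℝ), IntegrableOn (ι w) (Icc 1 b)) :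
    E × ℂ →ₗ[ℂ] C(ℝ, ℂ) where
  toFun q := ⟨fun x => logPrimitive (ι q.1) x + q.2,
    (continuous_logPrimitive (hloc q.1)).add continuous_const⟩
  map_add' p q := by
    ext x
    have hadd : logPrimitive (ι (p + q).1) = logPrimitive (ι p.1) + logPrimitive (ι q.1) := by
      rw [Prod.fst_add, map_add, logPrimitive_congr_ae (AEEqFun.coeFn_add _ _),
        logPrimitive_add (hloc p.1) (hloc q.1)]
    simp only [ContinuousMap.coe_mk, ContinuousMap.add_apply, hadd, Pi.add_apply, Prod.snd_add]
    ring
  map_smul' c q := by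
    ext x
    have hsmul : logPrimitive (ι (c • q).1) = c • logPrimitive (ι q.1) := by
      rw [Prod.smul_fst, map_smul, logPrimitive_congr_ae (AEEqFun.coeFn_smul _ _),
        logPrimitive_smul]
    simp only [ContinuousMap.coe_mk, ContinuousMap.smul_apply, hsmul, Pi.smul_apply,
      Prod.smul_snd, smul_add, RingHom.id_apply]

lemma logAntiderivative_apply (hloc : ∀ (w : E) (b : ℝ), IntegrableOn (ι w) (Icc 1 b))
    (q : E × ℂ) (x : ℝ) : logAntiderivative hloc q x = logPrimitive (ι q.1) x + q.2 :=
  rfl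

lemma logAntiderivative_sub_apply (hloc : ∀ (w : E) (b : ℝ), IntegrableOn (ι w) (Icc 1 b))
    {w w' : E} {c x : ℝ} (hc : 1 ≤ c) (hx : 1 ≤ x) (hw' : ι w' =ᵐ[μIci] fun r => ι w (c * r)) :
    logAntiderivative hloc (w' - w, logPrimitive (ι w) c) x =
      logPrimitive (ι w) (c * x) - logPrimitive (ι w) x := by
  have hsplit : (w' - w, logPrimitive (ι w) c) = (w', logPrimitive (ι w) c) - (w, 0) := by simp
  rw [hsplit, map_sub, ContinuousMap.sub_apply, logAntiderivative_apply, logAntiderivative_apply,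
    logPrimitive_congr_ae hw', logPrimitive_mul (hloc w) hc hx]
  ring

lemma exists_toAEEqFun_logAntiderivative_eq [FiniteDimensional ℂ E]
    (hloc : ∀ (w : E) (b : ℝ), IntegrableOn (ι w) (Icc 1 b))
    (hstab : ∀ w : E, ∃ᶠ c in 𝓝[>] (1 : ℝ), ∃ w', ι w' =ᵐ[μIci] fun r => ι w (c * r)) (w : E) :
    ∃ q, (logAntiderivative hloc q).toAEEqFun μIci = ι w := by
  let X : Set ℝ := {x | 1 < x ∧ HasDerivAt (logPrimitive (ι w)) (ι w x / x) x}
  have hlim : ∀ x ∈ X, Tendsto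
      (fun c : ℝ => (c - 1)⁻¹ • (logPrimitive (ι w) (c * x) - logPrimitive (ι w) x))
      (𝓝[>] 1) (𝓝 (ι w x)) := fun x hx => by
    have hx0 : (x : ℂ) ≠ 0 := by exact_mod_cast (zero_lt_one.trans hx.1).ne'
    simpa only [Complex.real_smul, mul_div_cancel₀ _ hx0] using tendsto_slope_comp_mul_right hx.2
  obtain ⟨q, hq⟩ := exists_eqOn_of_tendsto_of_frequently
    (ContinuousMap.coeFnLinearMap ℂ ∘ₗ logAntiderivative hloc) hlim <| by
      refine ((hstab w).and_eventually self_mem_nhdsWithin).mono ?_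
      rintro c ⟨⟨w', hw'⟩, hc⟩
      refine ⟨(((c - 1)⁻¹ : ℝ) : ℂ) • (w' - w, logPrimitive (ι w) c), fun x hx => ?_⟩
      rw [map_smul, Pi.smul_apply, Complex.coe_smul]
      exact congrArg _ (logAntiderivative_sub_apply hloc (le_of_lt hc) hx.1.le hw')
  refine ⟨q, AEEqFun.ext ((ContinuousMap.coeFn_toAEEqFun _ _).trans ?_)⟩
  filter_upwards [ae_μIci_one_lt, ae_hasDerivAt_logPrimitive (hloc w)] with x hx1 hx
  exact hq ⟨hx1, hx⟩

lemma exists_continuous_representatives_hasDerivAt [FiniteDimensional ℂ E]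
    (hloc : ∀ (w : E) (b : ℝ), IntegrableOn (ι w) (Icc 1 b))
    (hstab : ∀ w : E, ∃ᶠ c in 𝓝[>] (1 : ℝ), ∃ w', ι w' =ᵐ[μIci] fun r => ι w (c * r)) :
    ∃ (D : Module.End ℂ E) (Φ : E →ₗ[ℂ] C(ℝ, ℂ)),
      ContinuousMap.toAEEqFunLinearMap μIci ∘ₗ Φ = ι ∧
      ∀ w, ∀ x ∈ Ioi (1 : ℝ), HasDerivAt (Φ w) (Φ (D w) x / x) x := by
  let A := ContinuousMap.toAEEqFunLinearMap μIci ∘ₗ logAntiderivative hloc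
  have hrange : ∀ w, ι w ∈ LinearMap.range A :=
    exists_toAEEqFun_logAntiderivative_eq hloc hstab
  obtain ⟨T, hT⟩ := Module.projective_lifting_property A.rangeRestrict (ι.codRestrict _ hrange)
    A.surjective_rangeRestrict
  have hrep : ∀ w, (logAntiderivative hloc (T w)).toAEEqFun μIci = ι w := fun w =>
    congrArg Subtype.val (LinearMap.congr_fun hT w)
  refine ⟨LinearMap.fst ℂ E ℂ ∘ₗ T, logAntiderivative hloc ∘ₗ T, LinearMap.ext hrep,
    fun w x hx => ?_⟩
  let f := logAntiderivative hloc (T (T w).1)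
  have hf : ι (T w).1 =ᵐ[μIci] f := by
    rw [← hrep]
    exact ContinuousMap.coeFn_toAEEqFun μIci f
  have hder := (hasDerivAt_logPrimitive f.continuous hx).add_const (T w).2
  rwa [← logPrimitive_congr_ae hf] at hder

end Representatives

section Span

/-- The almost everywhere class of `logPow α j` on `[1, ∞)`. -/
def logPowClass (α : ℂ) (j : ℕ) : ℝ →ₘ[μIci] ℂ :=
  AEEqFun.mk (logPow α j) (measurable_logPow α j).aestronglyMeasurable

/-- The space of almost everywhere classes of elements of `logPowSpan α k`. -/
def logPowClassSpan (α : ℂ) (k : ℕ) : Submodule ℂ (ℝ →ₘ[μIci] ℂ) :=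
  Submodule.span ℂ (range fun j : Fin k => logPowClass α j)

lemma eq_logPowClass_iff {α : ℂ} {j : ℕ} {w : ℝ →ₘ[μIci] ℂ} :
    w = logPowClass α j ↔ w =ᵐ[μIci] logPow α j := by
  have hmk : logPowClass α j =ᵐ[μIci] logPow α j := AEEqFun.coeFn_mk _ _
  exact ⟨fun h => h ▸ hmk, fun h => AEEqFun.ext (h.trans hmk.symm)⟩

instance (α : ℂ) (k : ℕ) : FiniteDimensional ℂ (logPowClassSpan α k) :=
  FiniteDimensional.span_of_finite ℂ (finite_range _)

lemma finrank_logPowClassSpan_le (α : ℂ) (k : ℕ) :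
    Module.finrank ℂ (logPowClassSpan α k) ≤ k :=
  (finrank_range_le_card _).trans_eq (Fintype.card_fin k)

lemma mem_logPowClassSpan_of_ae_eq {α : ℂ} {k : ℕ} {w : ℝ →ₘ[μIci] ℂ} {h : ℝ → ℂ}
    (hh : h ∈ logPowSpan α k) (hw : w =ᵐ[μIci] h) : w ∈ logPowClassSpan α k := by
  obtain ⟨v, hv, hvh⟩ : ∃ v ∈ logPowClassSpan α k, v =ᵐ[μIci] h := by
    clear hw
    induction hh using Submodule.span_induction with
    | mem f hf =>
      obtain ⟨j, rfl⟩ := hf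
      exact ⟨logPowClass α j, Submodule.subset_span ⟨j, rfl⟩, eq_logPowClass_iff.1 rfl⟩
    | zero => exact ⟨0, zero_mem _, AEEqFun.coeFn_zero⟩
    | add f₁ f₂ _ _ ih₁ ih₂ =>
      obtain ⟨v₁, hv₁, h₁⟩ := ih₁
      obtain ⟨v₂, hv₂, h₂⟩ := ih₂
      exact ⟨v₁ + v₂, add_mem hv₁ hv₂, (AEEqFun.coeFn_add _ _).trans (h₁.add h₂)⟩
    | smul c f _ ih =>
      obtain ⟨v, hv, hvf⟩ := ih
      exact ⟨c • v, Submodule.smul_mem _ _ hv, (AEEqFun.coeFn_smul _ _).trans (hvf.const_smul c)⟩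
  rwa [AEEqFun.ext (hw.trans hvh.symm)]

lemma map_maxGenEigenspace_eq_logPowClassSpan {E : Type*} [AddCommGroup E] [Module ℂ E]
    [FiniteDimensional ℂ E] {D : Module.End ℂ E} {Φ : E →ₗ[ℂ] C(ℝ, ℂ)}
    (hinj : Function.Injective (ContinuousMap.toAEEqFunLinearMap (𝕜 := ℂ) μIci ∘ₗ Φ))
    (hΦ : ∀ v, ∀ x ∈ Ioi (1 : ℝ), HasDerivAt (Φ v) (Φ (D v) x / x) x) (α : ℂ) :
    (D.maxGenEigenspace α).map (ContinuousMap.toAEEqFunLinearMap (𝕜 := ℂ) μIci ∘ₗ Φ) =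
      logPowClassSpan α (Module.finrank ℂ (D.maxGenEigenspace α)) := by
  refine Submodule.eq_of_le_of_finrank_le ?_ ?_
  · rintro _ ⟨v, hv, rfl⟩
    rw [SetLike.mem_coe, maxGenEigenspace_eq_genEigenspace_finrank_maxGenEigenspace] at hv
    obtain ⟨h, hh, hvh⟩ := exists_mem_logPowSpan_eqOn_of_mem_genEigenspace
      (Φ := ContinuousMap.coeFnLinearMap ℂ ∘ₗ Φ) isOpen_Ioi isPreconnected_Ioi (by simp) hΦ hv
    refine mem_logPowClassSpan_of_ae_eq hh ((ContinuousMap.coeFn_toAEEqFun μIci (Φ v)).trans ?_)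
    filter_upwards [ae_μIci_one_lt] with x hx using hvh hx
  · rw [(Submodule.equivMapOfInjective _ hinj (D.maxGenEigenspace α)).symm.finrank_eq]
    exact finrank_logPowClassSpan_le α _

lemma exists_iSup_logPowClassSpan_eq_span {p : ℂ → ℕ} (hp : p.support.Finite) :
    ∃ (n : ℕ) (α : Fin n → ℂ) (m : Fin n → ℕ), ⨆ β, logPowClassSpan β (p β) =
      Submodule.span ℂ
        {w : ℝ →ₘ[μIci] ℂ | ∃ (i : Fin n) (j : ℕ), j < m i ∧ w =ᵐ[μIci] logPow (α i) j} := by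
  let e := hp.toFinset.equivFin.symm
  refine ⟨_, fun i => e i, fun i => p (e i), ?_⟩
  simp only [logPowClassSpan, ← Submodule.span_iUnion, ← eq_logPowClass_iff]
  congr 1
  ext w
  simp only [mem_iUnion, mem_range]
  constructor
  · rintro ⟨β, j, rfl⟩
    have hβ : β ∈ hp.toFinset := hp.mem_toFinset.2 (Nat.ne_zero_of_lt j.2)
    obtain ⟨i, hi⟩ := e.surjective ⟨β, hβ⟩
    exact ⟨i, j, by simp [hi], by rw [hi]⟩
  · rintro ⟨i, j, hj, rfl⟩
    exact ⟨e i, ⟨j, hj⟩, rfl⟩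

end Span

theorem exists_range_eq_iSup_logPowClassSpan {E : Type*} [AddCommGroup E] [Module ℂ E]
    [FiniteDimensional ℂ E] {ι : E →ₗ[ℂ] ℝ →ₘ[μIci] ℂ} (hι : Function.Injective ι)
    (hloc : ∀ (w : E) (b : ℝ), IntegrableOn (ι w) (Icc 1 b))
    (hstab : ∀ w : E, ∃ᶠ c in 𝓝[>] (1 : ℝ), ∃ w', ι w' =ᵐ[μIci] fun r => ι w (c * r)) :
    ∃ p : ℂ → ℕ, p.support.Finite ∧ LinearMap.range ι = ⨆ α, logPowClassSpan α (p α) := by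
  obtain ⟨D, Φ, rfl, hΦ⟩ := exists_continuous_representatives_hasDerivAt hloc hstab
  have hfinite : {α | D.maxGenEigenspace α ≠ ⊥}.Finite :=
    WellFoundedGT.finite_ne_bot_of_iSupIndep D.independent_maxGenEigenspace
  refine ⟨fun α => Module.finrank ℂ (D.maxGenEigenspace α),
    hfinite.subset fun α hα h => hα (by simp [h]), ?_⟩
  rw [LinearMap.range_eq_map, ← D.iSup_maxGenEigenspace_eq_top, Submodule.map_iSup]
  simp only [map_maxGenEigenspace_eq_logPowClassSpan hι hΦ]

theorem finiteDim_dilation_invariant_span_general (N : Submodule ℂ (ℝ →ₘ[μIci] ℂ))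
    (hfin : FiniteDimensional ℂ N) (hloc : ∀ w ∈ N, ∀ b : ℝ, IntegrableOn w (Icc 1 b))
    (hstab : ∀ w ∈ N, ∃ᶠ c in 𝓝[>] (1 : ℝ), ∃ w' ∈ N, w' =ᵐ[μIci] fun r => w (c * r)) :
    ∃ (n : ℕ) (α : Fin n → ℂ) (p : Fin n → ℕ), N = Submodule.span ℂ
      {w : ℝ →ₘ[μIci] ℂ | ∃ (i : Fin n) (j : ℕ), j < p i ∧ w =ᵐ[μIci] logPow (α i) j} := by
  -- Instance search does not unify the monoid under `N.addCommGroup` with the one in `Module ℂ N`.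
  let : AddCommGroup N := Module.addCommMonoidToAddCommGroup ℂ
  have : FiniteDimensional ℂ N := hfin
  obtain ⟨p, hp, hN⟩ := exists_range_eq_iSup_logPowClassSpan N.injective_subtype
    (fun w => hloc w w.2) fun w => (hstab w w.2).mono fun c ⟨w', hw', h⟩ => ⟨⟨w', hw'⟩, h⟩
  rw [← N.range_subtype, hN]
  exact exists_iSup_logPowClassSpan_eq_span hp

/-- A finite-dimensional space `N` of (a.e.-classes of) locally integrable
functions on `[1, ∞)` which is stable by all the dilation/restriction operators
`(S_λ w)(r) = w(λ r)`, `λ > 1`, is spanned by functions of the form `r ↦ (log r)ʲ r^α`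
(with `r^α = exp(α log r)` for complex `α`). -/
theorem finiteDim_dilation_invariant_span
    (N : Submodule ℂ (ℝ →ₘ[μIci] ℂ))
    (hfin : FiniteDimensional ℂ N)
    (hloc : ∀ w : ℝ →ₘ[μIci] ℂ, w ∈ N → ∀ b : ℝ, IntegrableOn (w : ℝ → ℂ) (Icc 1 b) volume)
    (hstab : ∀ lam : ℝ, 1 < lam → ∀ w : ℝ →ₘ[μIci] ℂ, w ∈ N →
      ∃ w' ∈ N, (w' : ℝ → ℂ) =ᵐ[μIci] fun r : ℝ => (w : ℝ → ℂ) (lam * r)) :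
    ∃ (n : ℕ) (α : Fin n → ℂ) (p : Fin n → ℕ),
      N = Submodule.span ℂ
        {w : ℝ →ₘ[μIci] ℂ | ∃ (i : Fin n) (j : ℕ), j < p i ∧
          (w : ℝ → ℂ) =ᵐ[μIci]
            fun r : ℝ => ((Real.log r : ℝ) : ℂ) ^ j * Complex.exp (α i * (Real.log r : ℂ))} := by
  exact finiteDim_dilation_invariant_span_general N hfin hloc fun w hw =>
    eventually_mem_nhdsWithin.frequently.mono fun lam hlam => hstab lam hlam w hw
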